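/- arXiv:2310.03050 — 6 statements merged into one kernel-verified Lean document; each statement's English description precedes it below -/
import Mathlib

section
/- Let I ⊆ [0, ∞) be a Lebesgue measurable set with finite Lebesgue measure |I|. Then for every natural number n, (1/n!) ∫_I s^n e^{−s} ds ≤ 1 − e^{−|I|}. -/
open MeasureTheory Real

/-!
Write `f n s = s ^ n * e ^ (-s) / n!`. The proof is an induction on `n` resting on two facts.

* Bathtub principle (`bathtub`): if `f ≥ t` on `J`, and `f ≤ t` on the rest of `[0, ∞)`, then `J`
  maximizes `∫ f` among the subsets of `[0, ∞)` of measure `|J|`.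
* `f (n+1)' = f n - f (n+1)`. Hence `f (n+1)` increases on `[0, n+1]` and decreases on `[n+1, ∞)`,
  so that for each length `m` some interval `[a, a+m]` satisfies `f (n+1) a = f (n+1) (a+m)` and is
  optimal by the bathtub principle. Integrating the differential equation over it, the boundary
  terms cancel: `∫ f (n+1) = ∫ f n` on `[a, a+m]`, and the latter is bounded by induction.

For `n = 0` the function is decreasing and the optimal interval is `[0, m]`, which gives equality.
-/

/-- The density `s ^ n e ^ (-s) / n!` of the Gamma distribution of shape `n + 1`, considered on
all of `ℝ`. -/
noncomputable def gammaDensity (n : ℕ) (s : ℝ) : ℝ := s ^ n * exp (-s) / n.factorial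

theorem continuous_gammaDensity (n : ℕ) : Continuous (gammaDensity n) := by
  unfold gammaDensity; fun_prop

theorem gammaDensity_nonneg (n : ℕ) {s : ℝ} (hs : 0 ≤ s) : 0 ≤ gammaDensity n s := by
  unfold gammaDensity; positivity

theorem integrableOn_gammaDensity (n : ℕ) : IntegrableOn (gammaDensity n) (Set.Ici 0) := by
  rw [integrableOn_Ici_iff_integrableOn_Ioi]
  have h := Real.GammaIntegral_convergent (s := (n : ℝ) + 1) (by positivity)
  refine IntegrableOn.congr_fun (h.div_const (n.factorial : ℝ)) (fun x _ => ?_) measurableSet_Ioi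
  simp [gammaDensity, mul_comm]

theorem hasDerivAt_gammaDensity_succ (n : ℕ) (s : ℝ) :
    HasDerivAt (gammaDensity (n + 1)) (gammaDensity n s - gammaDensity (n + 1) s) s := by
  have h := (((hasDerivAt_pow (n + 1) s).mul (hasDerivAt_neg s).exp).div_const
    ((n + 1).factorial : ℝ))
  refine h.congr_deriv ?_
  have : (n.factorial : ℝ) ≠ 0 := by positivity
  simp only [gammaDensity, Nat.factorial_succ]
  push_cast
  field_simp
  ring

theorem gammaDensity_succ_eq (n : ℕ) (s : ℝ) :
    gammaDensity (n + 1) s = gammaDensity n s * (s / (n + 1)) := by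
  have : (n.factorial : ℝ) ≠ 0 := by positivity
  simp only [gammaDensity, Nat.factorial_succ]
  push_cast
  field_simp
  ring

theorem monotoneOn_gammaDensity_succ (n : ℕ) :
    MonotoneOn (gammaDensity (n + 1)) (Set.Icc 0 (n + 1)) := by
  refine monotoneOn_of_deriv_nonneg (convex_Icc _ _) (continuous_gammaDensity _).continuousOn
    (fun x _ => (hasDerivAt_gammaDensity_succ n x).differentiableAt.differentiableWithinAt)
    fun x hx => ?_
  rw [interior_Icc] at hx
  rw [(hasDerivAt_gammaDensity_succ n x).deriv, gammaDensity_succ_eq, sub_nonneg]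
  exact mul_le_of_le_one_right (gammaDensity_nonneg n hx.1.le)
    ((div_le_one (by positivity)).2 hx.2.le)

theorem antitoneOn_gammaDensity_succ (n : ℕ) :
    AntitoneOn (gammaDensity (n + 1)) (Set.Ici (n + 1)) := by
  refine antitoneOn_of_deriv_nonpos (convex_Ici _) (continuous_gammaDensity _).continuousOn
    (fun x _ => (hasDerivAt_gammaDensity_succ n x).differentiableAt.differentiableWithinAt)
    fun x hx => ?_
  rw [interior_Ici, Set.mem_Ioi] at hx
  have h0 : (0 : ℝ) < n + 1 := by positivity
  rw [(hasDerivAt_gammaDensity_succ n x).deriv, gammaDensity_succ_eq, sub_nonpos]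
  exact le_mul_of_one_le_right (gammaDensity_nonneg n (h0.trans hx).le)
    ((one_le_div h0).2 hx.le)

/-- Bathtub principle: pointwise `1_I (f - t) ≤ 1_J (f - t)`, and the constant `t` contributes
equally to both sides because `I` and `J` have the same measure. -/
theorem bathtub {f : ℝ → ℝ} {I J : Set ℝ} {t : ℝ} (hf : IntegrableOn f (Set.Ici 0))
    (hI : MeasurableSet I) (hJ : MeasurableSet J) (hI0 : I ⊆ Set.Ici 0) (hJ0 : J ⊆ Set.Ici 0)
    (hIfin : volume I < ⊤) (hvol : volume J = volume I)
    (hin : ∀ x ∈ J, t ≤ f x) (hout : ∀ x, 0 ≤ x → x ∉ J → f x ≤ t) :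
    ∫ s in I, f s ≤ ∫ s in J, f s := by
  have hfI := hf.mono_set hI0
  have hfJ := hf.mono_set hJ0
  have hcI : IntegrableOn (fun _ => t) I := integrableOn_const hIfin.ne
  have hcJ : IntegrableOn (fun _ => t) J := integrableOn_const (hvol ▸ hIfin.ne)
  have key : ∫ s in I, (f s - t) ≤ ∫ s in J, (f s - t) := by
    rw [← integral_indicator hI, ← integral_indicator hJ]
    refine integral_mono ((hfI.sub hcI).integrable_indicator hI)
      ((hfJ.sub hcJ).integrable_indicator hJ) fun x => ?_
    by_cases hxI : x ∈ I <;> by_cases hxJ : x ∈ J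
    · simp [hxI, hxJ]
    · simpa [hxI, hxJ] using hout x (hI0 hxI) hxJ
    · simpa [hxI, hxJ] using hin x hxJ
    · simp [hxI, hxJ]
  rw [integral_sub hfI hcI, integral_sub hfJ hcJ] at key
  simp only [setIntegral_const, Measure.real, hvol] at key
  linarith

/-- An interval of length `m` around the mode of `gammaDensity (n + 1)` whose endpoints lie on the
same level. -/
theorem exists_level_interval (n : ℕ) {m : ℝ} (hm : 0 ≤ m) :
    ∃ a : ℝ, 0 ≤ a ∧ a ≤ n + 1 ∧ (n : ℝ) + 1 ≤ a + m ∧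
      gammaDensity (n + 1) a = gammaDensity (n + 1) (a + m) := by
  have hn : (0 : ℝ) < n + 1 := by positivity
  have hcont := continuous_gammaDensity (n + 1)
  set l : ℝ := max 0 (n + 1 - m) with hl
  have hl0 : 0 ≤ l := le_max_left _ _
  have hlm : (n : ℝ) + 1 ≤ l + m := by linarith [le_max_right 0 ((n : ℝ) + 1 - m)]
  have hln : l ≤ n + 1 := max_le hn.le (by linarith)
  have hleft : gammaDensity (n + 1) l ≤ gammaDensity (n + 1) (l + m) := by
    rcases max_choice 0 ((n : ℝ) + 1 - m) with h | h
    · rw [hl, h]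
      have : gammaDensity (n + 1) 0 = 0 := by simp [gammaDensity]
      rw [this]
      exact gammaDensity_nonneg _ (by linarith)
    · have h' : l + m = n + 1 := by rw [hl, h]; ring
      rw [h']
      exact monotoneOn_gammaDensity_succ n ⟨hl0, hln⟩ ⟨hn.le, le_rfl⟩ hln
  have hright : gammaDensity (n + 1) ((n : ℝ) + 1 + m) ≤ gammaDensity (n + 1) ((n : ℝ) + 1) :=
    antitoneOn_gammaDensity_succ n (Set.mem_Ici.2 le_rfl) (Set.mem_Ici.2 (by linarith))
      (by linarith)
  have hc : ContinuousOn (fun a => gammaDensity (n + 1) a - gammaDensity (n + 1) (a + m))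
      (Set.Icc l (n + 1)) := by
    fun_prop
  obtain ⟨a, ha, h⟩ := intermediate_value_Icc hln hc
    (show (0 : ℝ) ∈ Set.Icc _ _ from ⟨sub_nonpos.2 hleft, sub_nonneg.2 hright⟩)
  exact ⟨a, hl0.trans ha.1, ha.2, by linarith [ha.1], sub_eq_zero.1 h⟩

theorem setIntegral_gammaDensity_le (n : ℕ) : ∀ I : Set ℝ, MeasurableSet I → I ⊆ Set.Ici 0 →
    volume I < ⊤ → ∫ s in I, gammaDensity n s ≤ 1 - exp (-(volume I).toReal) := by
  induction n with
  | zero =>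
    intro I hI hI0 hIfin
    set m := (volume I).toReal with hm
    have hm0 : 0 ≤ m := ENNReal.toReal_nonneg
    have hvol : volume (Set.Icc 0 m) = volume I := by
      rw [Real.volume_Icc, sub_zero, hm, ENNReal.ofReal_toReal hIfin.ne]
    refine (bathtub (t := exp (-m)) (integrableOn_gammaDensity 0) hI measurableSet_Icc hI0
      (fun x hx => hx.1) hIfin hvol (fun x hx => ?_) (fun x hx hxJ => ?_)).trans_eq ?_
    · simpa [gammaDensity] using hx.2
    · have : m ≤ x := le_of_not_ge fun h => hxJ ⟨hx, h⟩
      simpa [gammaDensity] using this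
    · rw [integral_Icc_eq_integral_Ioc, ← intervalIntegral.integral_of_le hm0]
      simp [gammaDensity, intervalIntegral.integral_comp_neg (fun x => exp x)]
  | succ n ih =>
    intro I hI hI0 hIfin
    set m := (volume I).toReal with hm
    have hm0 : 0 ≤ m := ENNReal.toReal_nonneg
    obtain ⟨a, ha0, han, hanm, hlev⟩ := exists_level_interval n hm0
    have hvol : volume (Set.Icc a (a + m)) = volume I := by
      rw [Real.volume_Icc, add_sub_cancel_left, hm, ENNReal.ofReal_toReal hIfin.ne]
    have hJ0 : Set.Icc a (a + m) ⊆ Set.Ici 0 := fun x hx => ha0.trans hx.1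
    have hmono := monotoneOn_gammaDensity_succ n
    have hanti := antitoneOn_gammaDensity_succ n
    have hcomp : ∫ s in I, gammaDensity (n + 1) s
        ≤ ∫ s in Set.Icc a (a + m), gammaDensity (n + 1) s := by
      refine bathtub (t := gammaDensity (n + 1) a) (integrableOn_gammaDensity _) hI
        measurableSet_Icc hI0 hJ0 hIfin hvol (fun x hx => ?_) (fun x hx hxJ => ?_)
      · rcases le_total x (n + 1) with h | h
        · exact hmono ⟨ha0, han⟩ ⟨ha0.trans hx.1, h⟩ hx.1
        · exact hlev ▸ hanti h hanm hx.2
      · rcases le_total x a with h | h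
        · exact hmono ⟨hx, h.trans han⟩ ⟨ha0, han⟩ h
        · have h' : a + m ≤ x := le_of_not_ge fun h' => hxJ ⟨h, h'⟩
          exact hlev ▸ hanti hanm (hanm.trans h') h'
    have hparts : ∫ s in Set.Icc a (a + m), gammaDensity (n + 1) s
        = ∫ s in Set.Icc a (a + m), gammaDensity n s := by
      have hi := fun k => (continuous_gammaDensity k).intervalIntegrable (μ := volume) a (a + m)
      have h := intervalIntegral.integral_eq_sub_of_hasDerivAt
        (fun x _ => hasDerivAt_gammaDensity_succ n x) ((hi n).sub (hi (n + 1)))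
      rw [intervalIntegral.integral_sub (hi n) (hi (n + 1)), hlev, sub_self] at h
      rw [integral_Icc_eq_integral_Ioc, integral_Icc_eq_integral_Ioc,
        ← intervalIntegral.integral_of_le (by linarith),
        ← intervalIntegral.integral_of_le (by linarith)]
      linarith
    have := ih _ measurableSet_Icc hJ0 (hvol ▸ hIfin)
    rw [hvol] at this
    exact (hcomp.trans_eq hparts).trans this

/-- Galbis' first integration lemma: for a measurable set `I ⊆ [0, ∞)` of finite
Lebesgue measure and any `n ∈ ℕ₀`, `(1/n!) ∫_I s^n e^{-s} ds ≤ 1 - e^{-|I|}`. -/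
theorem galbis_lemma_one (I : Set ℝ) (hI : MeasurableSet I) (hI0 : I ⊆ Set.Ici 0)
    (hIfin : volume I < ⊤) (n : ℕ) :
    (1 / (n.factorial : ℝ)) * ∫ s in I, s ^ n * Real.exp (-s) ≤
      1 - Real.exp (-(volume I).toReal) := by
  have h := setIntegral_gammaDensity_le n I hI hI0 hIfin
  simp only [gammaDensity] at h
  rwa [integral_div, div_eq_mul_one_div, mul_comm] at h
end

section
/- Let (I_k)_{k=1}^N be pairwise disjoint Lebesgue measurable subsets of [0, ∞), each of finite Lebesgue measure, and let 0 ≤ ε_k ≤ 1 for every 1 ≤ k ≤ N. Then for every p ∈ ℕ₀ = {0, 1, 2, …}, Σ_{k=1}^N ε_k ∫_{I_k} (t^p / p!) e^{−t} dt ≤ 1 − exp(−Σ_{k=1}^N ε_k |I_k|). -/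
open MeasureTheory Real

/-!
The weighted sets enter only through the density `h = ∑ₖ εₖ 1_{Iₖ}`, which satisfies `0 ≤ h ≤ 1`
by disjointness and has mass `M = ∑ₖ εₖ |Iₖ|`.

Since `exp (-t)` is decreasing, among all densities between `0` and `1` of mass at most `M` the
integral `∫_{t > y} h(t) exp (-t) dt` is largest for the indicator function of `(y, y + M]`
(bathtub principle). This gives the tail bound
`∫_{t > y} h(t) exp (-t) dt ≤ (1 - exp (-M)) exp (-y)` (`tail_le`), whose case `y = 0` is `p = 0`.
For `p ≥ 1`, the layer cake formula for the measure `h(t) exp (-t) dt` on `(0, ∞)` turns the tail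
bound into
`∫ t ^ p h(t) exp (-t) dt ≤ (1 - exp (-M)) ∫ p y ^ (p - 1) exp (-y) dy = (1 - exp (-M)) p!`
(`moment_le`).
-/

/-- Bathtub bound for the exponential tail of a density `0 ≤ h ≤ 1`: the extremal density is the
indicator function of `(y, y + ∫ h]`. -/
lemma tail_le (h : ℝ → ℝ) (hi : Integrable h) (h0 : ∀ t, 0 ≤ h t) (h1 : ∀ t, h t ≤ 1) (y : ℝ) :
    IntegrableOn (fun t => h t * exp (-t)) (Set.Ioi y) ∧
    ∫ t in Set.Ioi y, h t * exp (-t) ≤ exp (-y) * (1 - exp (-∫ t, h t)) := by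
  set M := ∫ t, h t with hM
  have hM0 : 0 ≤ M := integral_nonneg h0
  have hexp : IntegrableOn (fun t : ℝ => exp (-t)) (Set.Ioi y) := integrableOn_exp_neg_Ioi y
  have hint : IntegrableOn (fun t => h t * exp (-t)) (Set.Ioi y) := by
    refine Integrable.mono' hexp (hi.aestronglyMeasurable.restrict.mul (by fun_prop)) ?_
    filter_upwards with t
    rw [Real.norm_of_nonneg (mul_nonneg (h0 t) (exp_pos _).le)]
    exact mul_le_of_le_one_left (exp_pos _).le (h1 t)
  refine ⟨hint, ?_⟩
  -- `c` is the value of `exp (-t)` at the right end of the extremal interval `(y, y + M]`.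
  set c := exp (-(y + M)) with hc
  have hcpos : 0 < c := exp_pos _
  have hvi : IntegrableOn (fun t : ℝ => exp (-t) - c) (Set.Ioc y (y + M)) :=
    (Continuous.integrableOn_Ioc (by fun_prop))
  -- Both factors of `(h - 1_{(y, y + M]}) * (exp (-t) - c)` have opposite signs for `t > y`.
  have key : ∫ t in Set.Ioi y, h t * exp (-t) ≤
      ∫ t in Set.Ioi y, ((Set.Ioc y (y + M)).indicator (fun t => exp (-t) - c) t + c * h t) := by
    refine setIntegral_mono_on hint
      (((integrable_indicator_iff measurableSet_Ioc).2 hvi).integrableOn.add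
        (hi.const_mul c).integrableOn) measurableSet_Ioi fun t ht => ?_
    by_cases htM : t ≤ y + M
    · rw [Set.indicator_of_mem (show t ∈ Set.Ioc y (y + M) from ⟨ht, htM⟩)]
      have : c ≤ exp (-t) := exp_le_exp.2 (by linarith)
      nlinarith [h1 t]
    · rw [Set.indicator_of_notMem (fun hh => htM hh.2)]
      have : exp (-t) ≤ c := exp_le_exp.2 (by linarith)
      nlinarith [h0 t]
  refine key.trans ?_
  rw [integral_add ((integrable_indicator_iff measurableSet_Ioc).2 hvi).integrableOn
        (hi.const_mul c).integrableOn, setIntegral_indicator measurableSet_Ioc,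
      Set.inter_eq_self_of_subset_right Set.Ioc_subset_Ioi_self, integral_const_mul,
      ← intervalIntegral.integral_of_le (by linarith),
      intervalIntegral.integral_sub (Continuous.intervalIntegrable (by fun_prop) _ _) (by simp)]
  have hle : ∫ t in Set.Ioi y, h t ≤ M :=
    setIntegral_le_integral hi (Filter.Eventually.of_forall h0)
  have hcE : c = exp (-y) * exp (-M) := by rw [hc, ← exp_add]; ring_nf
  have : ∫ t in y..(y + M), exp (-t) = exp (-y) - c := by
    rw [intervalIntegral.integral_comp_neg (fun x => exp x), integral_exp]
  rw [this]
  simp only [intervalIntegral.integral_const, smul_eq_mul]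
  nlinarith [mul_le_mul_of_nonneg_left hle hcpos.le]

/-- The layer cake formula integrates the tail bound `tail_le` against `p y ^ (p - 1) dy`. -/
lemma moment_le (h : ℝ → ℝ) (hm : Measurable h) (hi : Integrable h) (h0 : ∀ t, 0 ≤ h t)
    (h1 : ∀ t, h t ≤ 1) (p : ℕ) :
    ∫ t in Set.Ioi 0, h t * (t ^ p * exp (-t)) ≤ p.factorial * (1 - exp (-∫ t, h t)) := by
  rcases Nat.eq_zero_or_pos p with rfl | hp
  · simpa using (tail_le h hi h0 h1 0).2
  set C := 1 - exp (-∫ t, h t) with hC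
  have hC0 : 0 ≤ C := by
    have : exp (-∫ t, h t) ≤ 1 := exp_le_one_iff.2 (neg_nonpos.2 (integral_nonneg h0))
    linarith
  have hmd : Measurable fun t => ENNReal.ofReal (h t * exp (-t)) := by fun_prop
  set ν : Measure ℝ := (volume.restrict (Set.Ioi 0)).withDensity
    (fun t => ENNReal.ofReal (h t * exp (-t))) with hν
  have hνtail (y : ℝ) (hy : 0 < y) : ν {t | y < t} ≤ ENNReal.ofReal (exp (-y) * C) := by
    obtain ⟨hint, hle⟩ := tail_le h hi h0 h1 y
    change ν (Set.Ioi y) ≤ _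
    rw [hν, withDensity_apply _ measurableSet_Ioi, Measure.restrict_restrict measurableSet_Ioi,
      Set.inter_eq_self_of_subset_left (Set.Ioi_subset_Ioi hy.le),
      ← ofReal_integral_eq_lintegral_ofReal hint
        (Filter.Eventually.of_forall fun t => mul_nonneg (h0 t) (exp_pos _).le)]
    exact ENNReal.ofReal_le_ofReal hle
  have hp' : (0 : ℝ) < p := by exact_mod_cast hp
  have hνpos : 0 ≤ᵐ[ν] fun t : ℝ => t := by
    refine (withDensity_absolutelyContinuous _ _).ae_le ?_
    filter_upwards [ae_restrict_mem measurableSet_Ioi] with t ht using le_of_lt ht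
  have hcake := lintegral_rpow_eq_lintegral_meas_lt_mul ν hνpos (by fun_prop) hp'
  have hgam : ∫⁻ t in Set.Ioi (0 : ℝ), ENNReal.ofReal (exp (-t) * t ^ ((p : ℝ) - 1))
      = ENNReal.ofReal (Gamma p) := by
    rw [Gamma_eq_integral hp', ofReal_integral_eq_lintegral_ofReal (GammaIntegral_convergent hp')]
    filter_upwards [ae_restrict_mem measurableSet_Ioi] with t ht
    exact mul_nonneg (exp_pos _).le (rpow_nonneg (le_of_lt ht) _)
  have hbound : ∫⁻ t, ENNReal.ofReal (t ^ (p : ℝ)) ∂ν ≤ ENNReal.ofReal (p.factorial * C) := by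
    rw [hcake]
    calc _ ≤ ENNReal.ofReal p * ∫⁻ t in Set.Ioi (0 : ℝ),
          ENNReal.ofReal C * ENNReal.ofReal (exp (-t) * t ^ ((p : ℝ) - 1)) := by
          gcongr 1
          refine setLIntegral_mono' measurableSet_Ioi fun t ht => ?_
          refine (mul_le_mul_left (hνtail t ht) _).trans_eq ?_
          rw [← ENNReal.ofReal_mul (by positivity), ← ENNReal.ofReal_mul hC0]
          congr 1; ring
      _ = ENNReal.ofReal (p.factorial * C) := by
          rw [lintegral_const_mul _ (by fun_prop), hgam, ← ENNReal.ofReal_mul hC0,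
            ← ENNReal.ofReal_mul hp'.le, ← Gamma_nat_eq_factorial, Gamma_add_one hp'.ne']
          congr 1; ring
  rw [integral_eq_lintegral_of_nonneg_ae]
  · refine ENNReal.toReal_le_of_le_ofReal (by positivity) (le_trans (le_of_eq ?_) hbound)
    rw [hν, lintegral_withDensity_eq_lintegral_mul _ hmd (by fun_prop)]
    refine lintegral_congr fun t => ?_
    rw [Pi.mul_apply, ← ENNReal.ofReal_mul (mul_nonneg (h0 t) (exp_pos _).le), rpow_natCast]
    congr 1; ring
  · filter_upwards [ae_restrict_mem measurableSet_Ioi] with t ht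
    exact mul_nonneg (h0 t) (mul_nonneg (pow_nonneg (le_of_lt ht) _) (exp_pos _).le)
  · exact Measurable.aestronglyMeasurable (by fun_prop)

/-- Galbis' second integration lemma: for pairwise disjoint measurable sets
`I₁, …, I_N ⊆ [0, ∞)` of finite measure and weights `0 ≤ ε_k ≤ 1`, for every `p ∈ ℕ₀`,
`Σ_k ε_k ∫_{I_k} (t^p/p!) e^{-t} dt ≤ 1 - exp(-Σ_k ε_k |I_k|)`. -/
theorem galbis_lemma_two (N : ℕ) (I : Fin N → Set ℝ)
    (hmeas : ∀ k, MeasurableSet (I k)) (hsub : ∀ k, I k ⊆ Set.Ici 0)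
    (hfin : ∀ k, volume (I k) < ⊤)
    (hdisj : Pairwise (Function.onFun Disjoint I))
    (ε : Fin N → ℝ) (hε0 : ∀ k, 0 ≤ ε k) (hε1 : ∀ k, ε k ≤ 1) (p : ℕ) :
    ∑ k, ε k * ∫ t in I k, t ^ p / (p.factorial : ℝ) * Real.exp (-t) ≤
      1 - Real.exp (-∑ k, ε k * (volume (I k)).toReal) := by
  set h : ℝ → ℝ := fun t => ∑ k, ε k * (I k).indicator (fun _ => (1 : ℝ)) t with hh
  have hik (k) : Integrable ((I k).indicator (fun _ => (1 : ℝ))) :=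
    (integrable_indicator_iff (hmeas k)).2 (integrableOn_const (hfin k).ne)
  have hm : Measurable h := Finset.measurable_sum _ fun k _ =>
    (measurable_const.indicator (hmeas k)).const_mul _
  have hi : Integrable h := integrable_finsetSum _ fun k _ => (hik k).const_mul _
  have h0 (t) : 0 ≤ h t := Finset.sum_nonneg fun k _ =>
    mul_nonneg (hε0 k) (Set.indicator_nonneg (fun _ _ => zero_le_one) _)
  -- By disjointness, at most one summand of `h t` is nonzero.
  have h1 (t) : h t ≤ 1 := by
    by_cases ht : ∃ k, t ∈ I k
    · obtain ⟨k, hk⟩ := ht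
      have : h t = ε k := by
        rw [hh]
        refine (Finset.sum_eq_single k (fun j _ hj => ?_) (by simp)).trans (by simp [hk])
        rw [Set.indicator_of_notMem (Set.disjoint_right.1 (hdisj hj) hk), mul_zero]
      exact this.trans_le (hε1 k)
    · have : h t = 0 := Finset.sum_eq_zero fun k _ => by
        rw [Set.indicator_of_notMem (fun hk => ht ⟨k, hk⟩), mul_zero]
      linarith
  have hM : ∫ t, h t = ∑ k, ε k * (volume (I k)).toReal := by
    rw [hh, integral_finsetSum _ fun k _ => (hik k).const_mul _]
    refine Finset.sum_congr rfl fun k _ => ?_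
    rw [integral_const_mul, integral_indicator_const _ (hmeas k)]
    simp [Measure.real]
  have hg : IntegrableOn (fun t : ℝ => t ^ p * exp (-t)) (Set.Ioi 0) := by
    have := GammaIntegral_convergent (s := p + 1) (by positivity)
    refine this.congr_fun (fun t _ => ?_) measurableSet_Ioi
    simp [mul_comm]
  have hsum : ∑ k, ε k * ∫ t in I k, t ^ p / (p.factorial : ℝ) * Real.exp (-t) =
      (p.factorial : ℝ)⁻¹ * ∫ t in Set.Ioi 0, h t * (t ^ p * exp (-t)) := by
    have hexpand (t : ℝ) : h t * (t ^ p * exp (-t)) =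
        ∑ k, ε k * (I k).indicator (fun t => t ^ p * exp (-t)) t := by
      rw [hh, Finset.sum_mul]
      refine Finset.sum_congr rfl fun k _ => ?_
      by_cases hk : t ∈ I k <;> simp [hk]
    simp_rw [hexpand]
    rw [integral_finsetSum _ fun k _ => (hg.indicator (hmeas k)).const_mul _, Finset.mul_sum]
    refine Finset.sum_congr rfl fun k _ => ?_
    rw [integral_const_mul, ← integral_Ici_eq_integral_Ioi, setIntegral_indicator (hmeas k),
      Set.inter_eq_self_of_subset_right (hsub k), mul_left_comm]
    congr 1
    rw [← integral_const_mul]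
    congr 1
    funext t
    ring
  rw [hsum, ← hM, inv_mul_le_iff₀ (by positivity)]
  exact moment_le h hm hi h0 h1 p
end

section
/- Let g : (0, ∞) → ℝ be measurable with g ≥ 0, g integrable on (0, ∞), and ‖g‖_∞ ≤ 1 (i.e., g(s) ≤ 1 for almost every s). Then sup_{n ∈ ℕ₀} (1/n!) ∫_0^∞ s^n e^{−s} g(s) ds ≤ 1 − e^{−‖g‖_{L¹(0,∞)}}. -/
/-!
Write `f n s = s ^ n / n! * exp (-s)`. The densities satisfy `f (n + 1) = f n * f 0` (convolution on
`(0, ∞)`), so by Tonelli `∫ f (n + 1) g = ∫ f n (T g)`, where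
`T g t = ∫_{s > t} exp (t - s) g s ds` is the adjoint of convolution with `f 0`
(`lintegral_density_succ_mul`). The operator `T` preserves the bounds `0 ≤ g ≤ 1` and does not
increase the integral (`expAverage_le_one`, `lintegral_expAverage_le`), so a bound that is monotone
in `∫ g` passes from `n` to `n + 1` and only `n = 0` is left.

For `n = 0` the bathtub inequality `exp (-s) g ≤ (exp (-s) - exp (-m))⁺ + exp (-m) g` integrates to
`∫ exp (-s) g ≤ 1 - exp (-m) - exp (-m) m + exp (-m) ∫ g` for every `m ≥ 0`; this is the form carried
through the induction (`lintegral_density_mul_le`). The choice `m = ∫ g` gives the theorem.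
The induction is carried out for `ℝ≥0∞`-valued functions, which removes all integrability conditions.
-/

open MeasureTheory Real

open scoped ENNReal

/-- The kernel `exp (t - s)` on `t < s`, extended by zero. -/
noncomputable def expKernel (t s : ℝ) : ℝ≥0∞ :=
  if t < s then ENNReal.ofReal (Real.exp (t - s)) else 0

/-- The operator `T`: the average of `G` over `(t, ∞)` with respect to the density `exp (t - s)`. -/
noncomputable def expAverage (G : ℝ → ℝ≥0∞) (t : ℝ) : ℝ≥0∞ :=
  ∫⁻ s in Set.Ioi (0 : ℝ), expKernel t s * G s

lemma measurable_expKernel : Measurable (fun p : ℝ × ℝ => expKernel p.1 p.2) := by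
  unfold expKernel
  exact Measurable.ite (measurableSet_lt measurable_fst measurable_snd) (by fun_prop)
    measurable_const

lemma measurable_expAverage {G : ℝ → ℝ≥0∞} (hG : Measurable G) : Measurable (expAverage G) := by
  unfold expAverage
  exact Measurable.lintegral_prod_right'
    (f := fun p : ℝ × ℝ => expKernel p.1 p.2 * G p.2)
    (measurable_expKernel.mul (hG.comp measurable_snd))

lemma lintegral_expKernel_right (t : ℝ) : ∫⁻ s, expKernel t s = 1 := by
  have h1 : (fun s => expKernel t s)
      = (Set.Ioi t).indicator (fun s => ENNReal.ofReal (Real.exp (t - s))) := by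
    ext s
    simp [expKernel, Set.indicator_apply]
  have he : (fun s => Real.exp (t - s)) = fun s => Real.exp t * Real.exp (-s) := by
    ext s
    rw [← Real.exp_add]; ring_nf
  rw [h1, lintegral_indicator measurableSet_Ioi, ← ofReal_integral_eq_lintegral_ofReal]
  · rw [he, integral_const_mul, integral_exp_neg_Ioi, ← Real.exp_add]
    simp
  · rw [he]
    exact (integrableOn_exp_neg_Ioi t).const_mul _
  · exact Filter.Eventually.of_forall fun s => (Real.exp_pos _).le

lemma expAverage_le_one {G : ℝ → ℝ≥0∞} (hG1 : ∀ s, G s ≤ 1) (t : ℝ) : expAverage G t ≤ 1 := by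
  calc expAverage G t ≤ ∫⁻ s in Set.Ioi (0 : ℝ), expKernel t s :=
        lintegral_mono fun s => mul_le_of_le_one_right' (hG1 s)
    _ ≤ ∫⁻ s, expKernel t s := setLIntegral_le_lintegral _ _
    _ = 1 := lintegral_expKernel_right t

/-- The convolution identity `f (n + 1) = f n * f 0`. -/
lemma lintegral_density_mul_expKernel (n : ℕ) {s : ℝ} (hs : 0 < s) :
    ∫⁻ t in Set.Ioi (0 : ℝ), ENNReal.ofReal (t ^ n / n.factorial * Real.exp (-t)) * expKernel t s
      = ENNReal.ofReal (s ^ (n + 1) / (n + 1).factorial * Real.exp (-s)) := by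
  have h1 : (fun t => ENNReal.ofReal (t ^ n / n.factorial * Real.exp (-t)) * expKernel t s)
      = (Set.Iio s).indicator
        (fun t => ENNReal.ofReal (t ^ n * (Real.exp (-s) / n.factorial))) := by
    ext t
    by_cases h : t < s
    · simp only [expKernel, h, if_true, Set.indicator_apply, Set.mem_Iio]
      rw [← ENNReal.ofReal_mul' (Real.exp_pos _).le, mul_assoc, ← Real.exp_add]
      congr 1
      ring_nf
    · simp [expKernel, h]
  rw [h1, lintegral_indicator measurableSet_Iio, Measure.restrict_restrict measurableSet_Iio,
    Set.Iio_inter_Ioi, restrict_Ioo_eq_restrict_Ioc, ← ofReal_integral_eq_lintegral_ofReal]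
  · rw [← intervalIntegral.integral_of_le hs.le, intervalIntegral.integral_mul_const, integral_pow,
      Nat.factorial_succ]
    congr 1
    push_cast
    have : (n.factorial : ℝ) ≠ 0 := by positivity
    have : (n : ℝ) + 1 ≠ 0 := by positivity
    simp
    field_simp
  · exact (Continuous.integrableOn_Ioc (by fun_prop))
  · filter_upwards [ae_restrict_mem measurableSet_Ioc] with t ht
    have := ht.1.le
    simp only [Pi.zero_apply]
    positivity

lemma lintegral_mul_expAverage {F G : ℝ → ℝ≥0∞} (hF : Measurable F) (hG : Measurable G) :
    ∫⁻ t in Set.Ioi (0 : ℝ), F t * expAverage G t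
      = ∫⁻ s in Set.Ioi (0 : ℝ), (∫⁻ t in Set.Ioi (0 : ℝ), F t * expKernel t s) * G s := by
  have hK := measurable_expKernel
  have h1 : ∀ t, F t * expAverage G t
      = ∫⁻ s in Set.Ioi (0 : ℝ), F t * expKernel t s * G s := by
    intro t
    have : Measurable fun s => expKernel t s * G s :=
      (hK.comp (measurable_const.prodMk measurable_id)).mul hG
    rw [expAverage, ← lintegral_const_mul _ this]
    simp only [mul_assoc]
  simp_rw [h1]
  rw [lintegral_lintegral_swap]
  · refine lintegral_congr fun s => lintegral_mul_const _ ?_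
    exact hF.mul (hK.comp (measurable_id.prodMk measurable_const))
  · exact (((hF.comp measurable_fst).mul hK).mul (hG.comp measurable_snd)).aemeasurable

lemma lintegral_density_succ_mul (n : ℕ) {G : ℝ → ℝ≥0∞} (hG : Measurable G) :
    ∫⁻ s in Set.Ioi (0 : ℝ),
        ENNReal.ofReal (s ^ (n + 1) / (n + 1).factorial * Real.exp (-s)) * G s
      = ∫⁻ t in Set.Ioi (0 : ℝ),
        ENNReal.ofReal (t ^ n / n.factorial * Real.exp (-t)) * expAverage G t := by
  rw [lintegral_mul_expAverage (by fun_prop) hG]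
  refine setLIntegral_congr_fun measurableSet_Ioi fun s hs => ?_
  simp only [lintegral_density_mul_expKernel n hs]

lemma lintegral_expKernel_left_le (s : ℝ) : ∫⁻ t, expKernel t s ≤ 1 := by
  have h1 : (fun t => expKernel t s)
      = (Set.Iio s).indicator (fun t => ENNReal.ofReal (Real.exp (t - s))) := by
    ext t
    simp [expKernel, Set.indicator_apply]
  have he : (fun t => Real.exp (t - s)) = fun t => Real.exp (-s) * Real.exp t := by
    ext t
    rw [← Real.exp_add]; ring_nf
  rw [h1, lintegral_indicator measurableSet_Iio, restrict_Iio_eq_restrict_Iic,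
    ← ofReal_integral_eq_lintegral_ofReal]
  · rw [he, integral_const_mul, integral_exp_Iic, ← Real.exp_add]
    simp
  · rw [he]
    exact (integrableOn_exp_Iic s).const_mul _
  · exact Filter.Eventually.of_forall fun s => (Real.exp_pos _).le

lemma lintegral_expAverage_le {G : ℝ → ℝ≥0∞} (hG : Measurable G) :
    ∫⁻ t in Set.Ioi (0 : ℝ), expAverage G t ≤ ∫⁻ s in Set.Ioi (0 : ℝ), G s := by
  have h := lintegral_mul_expAverage (F := fun _ => 1) measurable_const hG
  simp only [one_mul] at h
  rw [h]
  refine lintegral_mono fun s => mul_le_of_le_one_left' ?_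
  exact (setLIntegral_le_lintegral _ _).trans (lintegral_expKernel_left_le s)

/-- The bathtub bound for the exponential density, with threshold `exp (-m)`. -/
lemma lintegral_exp_mul_le {G : ℝ → ℝ≥0∞} (hG : Measurable G) (hG1 : ∀ s, G s ≤ 1)
    {m : ℝ} (hm : 0 ≤ m) :
    ∫⁻ s in Set.Ioi (0 : ℝ), ENNReal.ofReal (Real.exp (-s)) * G s
      ≤ ENNReal.ofReal (1 - Real.exp (-m) - Real.exp (-m) * m)
        + ENNReal.ofReal (Real.exp (-m)) * ∫⁻ s in Set.Ioi (0 : ℝ), G s := by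
  have hpt : ∀ s, ENNReal.ofReal (Real.exp (-s)) * G s
      ≤ (Set.Iic m).indicator (fun s => ENNReal.ofReal (Real.exp (-s) - Real.exp (-m))) s
        + ENNReal.ofReal (Real.exp (-m)) * G s := by
    intro s
    by_cases h : s ≤ m
    · have he : Real.exp (-m) ≤ Real.exp (-s) := Real.exp_le_exp.2 (by linarith)
      have hsplit : ENNReal.ofReal (Real.exp (-s))
          = ENNReal.ofReal (Real.exp (-s) - Real.exp (-m)) + ENNReal.ofReal (Real.exp (-m)) := by
        rw [← ENNReal.ofReal_add (by linarith) (Real.exp_pos _).le]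
        congr 1
        ring
      rw [Set.indicator_of_mem (show s ∈ Set.Iic m from h), hsplit, add_mul]
      gcongr
      exact mul_le_of_le_one_right' (hG1 s)
    · rw [Set.indicator_of_notMem (by simpa using h), zero_add]
      push Not at h
      gcongr
  refine (lintegral_mono hpt).trans ?_
  rw [lintegral_add_right _ (hG.const_mul _), lintegral_const_mul _ hG,
    lintegral_indicator measurableSet_Iic, Measure.restrict_restrict measurableSet_Iic,
    Set.Iic_inter_Ioi, ← ofReal_integral_eq_lintegral_ofReal]
  · refine le_of_eq ?_
    congr 2
    rw [← intervalIntegral.integral_of_le hm, intervalIntegral.integral_sub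
      (Continuous.intervalIntegrable (by fun_prop) _ _)
      (Continuous.intervalIntegrable (by fun_prop) _ _)]
    rw [intervalIntegral.integral_comp_neg (fun x => Real.exp x)]
    simp
    ring
  · exact (Continuous.integrableOn_Ioc (by fun_prop))
  · filter_upwards [ae_restrict_mem measurableSet_Ioc] with t ht
    simpa using ht.2

lemma lintegral_density_mul_le (n : ℕ) {m : ℝ} (hm : 0 ≤ m) :
    ∀ {G : ℝ → ℝ≥0∞}, Measurable G → (∀ s, G s ≤ 1) →
    ∫⁻ s in Set.Ioi (0 : ℝ), ENNReal.ofReal (s ^ n / n.factorial * Real.exp (-s)) * G s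
      ≤ ENNReal.ofReal (1 - Real.exp (-m) - Real.exp (-m) * m)
        + ENNReal.ofReal (Real.exp (-m)) * ∫⁻ s in Set.Ioi (0 : ℝ), G s := by
  induction n with
  | zero =>
    intro G hG hG1
    simpa using lintegral_exp_mul_le hG hG1 hm
  | succ n ih =>
    intro G hG hG1
    rw [lintegral_density_succ_mul n hG]
    refine (ih (measurable_expAverage hG) (expAverage_le_one hG1)).trans ?_
    exact add_le_add_right (mul_le_mul_right (lintegral_expAverage_le hG) _) _

/-- Galbis-type integration lemma (extension): for `g ≥ 0` measurable on `(0, ∞)`,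
integrable with `‖g‖_∞ ≤ 1`, one has
`sup_{n ∈ ℕ₀} (1/n!) ∫_0^∞ s^n e^{-s} g(s) ds ≤ 1 - e^{-‖g‖_{L¹(0,∞)}}`. -/
theorem galbis_lemma_sup (g : ℝ → ℝ) (hgmeas : Measurable g)
    (hg0 : ∀ᵐ s ∂(volume.restrict (Set.Ioi (0 : ℝ))), 0 ≤ g s)
    (hg1 : ∀ᵐ s ∂(volume.restrict (Set.Ioi (0 : ℝ))), g s ≤ 1)
    (hgint : IntegrableOn g (Set.Ioi 0)) :
    (⨆ n : ℕ, (1 / (n.factorial : ℝ)) * ∫ s in Set.Ioi (0 : ℝ), s ^ n * Real.exp (-s) * g s)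
      ≤ 1 - Real.exp (-(∫ s in Set.Ioi (0 : ℝ), g s)) := by
  refine ciSup_le fun n => ?_
  set m := ∫ s in Set.Ioi (0 : ℝ), g s with hm_def
  have hm : 0 ≤ m := integral_nonneg_of_ae hg0
  have hexp : Real.exp (-m) * (1 + m) ≤ 1 := by
    have h1 : 1 + m ≤ Real.exp m := by linarith [Real.add_one_le_exp m]
    calc Real.exp (-m) * (1 + m) ≤ Real.exp (-m) * Real.exp m := by gcongr
      _ = 1 := by rw [← Real.exp_add]; simp
  have hle : Real.exp (-m) ≤ 1 := Real.exp_le_one_iff.2 (by linarith)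
  -- Truncation at `1` makes the upper bound hold everywhere and changes `g` only on a null set.
  set G : ℝ → ℝ≥0∞ := fun s => min (ENNReal.ofReal (g s)) 1 with hG_def
  have hG : Measurable G := by fun_prop
  have hGg : ∀ᵐ s ∂(volume.restrict (Set.Ioi (0 : ℝ))), G s = ENNReal.ofReal (g s) := by
    filter_upwards [hg1] with s hs
    exact min_eq_left (by simpa using hs)
  have hGint : ∫⁻ s in Set.Ioi (0 : ℝ), G s = ENNReal.ofReal m := by
    rw [lintegral_congr_ae hGg, hm_def, ofReal_integral_eq_lintegral_ofReal hgint hg0]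
  have key := lintegral_density_mul_le n hm hG fun s => min_le_right _ _
  rw [hGint, ← ENNReal.ofReal_mul (Real.exp_pos _).le,
    ← ENNReal.ofReal_add (by linarith) (by positivity)] at key
  have hfg : (1 / (n.factorial : ℝ)) * ∫ s in Set.Ioi (0 : ℝ), s ^ n * Real.exp (-s) * g s
      = (∫⁻ s in Set.Ioi (0 : ℝ),
          ENNReal.ofReal (s ^ n / n.factorial * Real.exp (-s)) * G s).toReal := by
    rw [← integral_const_mul, integral_eq_lintegral_of_nonneg_ae]
    · congr 1
      refine lintegral_congr_ae ?_
      filter_upwards [hGg, hg0] with s hs hs0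
      rw [hs, ← ENNReal.ofReal_mul' hs0]
      congr 1
      ring
    · filter_upwards [hg0, ae_restrict_mem measurableSet_Ioi] with s hs0 hs
      have : (0 : ℝ) ≤ s := le_of_lt hs
      simp only [Pi.zero_apply]
      positivity
    · exact Measurable.aestronglyMeasurable (by fun_prop)
  rw [hfg]
  refine ENNReal.toReal_le_of_le_ofReal (by linarith) (key.trans (le_of_eq ?_))
  congr 1
  ring
end

section
/- Let g : (0, ∞) → ℝ be measurable with g ≥ 0, g integrable on (0, ∞), and 0 ≤ g(s) ≤ 1 for almost every s. Then for each fixed n ∈ ℕ₀, (1/n!) ∫_0^∞ s^n e^{−s} g(s) ds ≤ 1 − e^{−‖g‖_{L¹(0,∞)}}. -/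
/-!
Write `f s = s ^ n * exp (-s) / n!`, let `F x = exp (-x) * ∑ k ≤ n, x ^ k / k!` be the tail integral
of `f` (so `F' = -f`, `F 0 = 1`, and `f ≤ F` because `f` is the last summand of `F`), and put
`A = ∫₀^∞ g`, `G x = ∫₀ˣ g`. Consider

`K x = ∫₀ˣ f g + F x * (1 - exp (G x - A))`.

It is absolutely continuous on every `[0, T]`, and for almost every `x`, with `E = exp (G x - A) ≤ 1`,

`K' x = f g - f (1 - E) - F E g ≤ f g - f (1 - E) - f E g = -f (1 - g) (1 - E) ≤ 0`.

Hence `∫₀ᵀ f g ≤ K T ≤ K 0 = 1 - exp (-A)`, and `T → ∞` gives the claim.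
-/

open MeasureTheory Real

namespace Galbis

/-- The tail of the Gamma density, `∫ s in (x, ∞), s ^ n * exp (-s) / n!`, in closed form. -/
noncomputable def tail (n : ℕ) (x : ℝ) : ℝ :=
  Real.exp (-x) * ∑ k ∈ Finset.range (n + 1), x ^ k / (k.factorial : ℝ)

lemma tail_zero (n : ℕ) : tail n 0 = 1 := by
  simp [tail, Finset.sum_range_succ']

lemma tail_nonneg (n : ℕ) {x : ℝ} (hx : 0 ≤ x) : 0 ≤ tail n x := by
  unfold tail
  positivity

lemma density_le_tail (n : ℕ) {x : ℝ} (hx : 0 ≤ x) :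
    x ^ n * Real.exp (-x) / (n.factorial : ℝ) ≤ tail n x := by
  have h : x ^ n / (n.factorial : ℝ) ≤
      ∑ k ∈ Finset.range (n + 1), x ^ k / (k.factorial : ℝ) :=
    Finset.single_le_sum (f := fun k : ℕ => x ^ k / (k.factorial : ℝ))
      (fun k _ => by positivity) (Finset.mem_range.2 (Nat.lt_succ_self n))
  calc x ^ n * Real.exp (-x) / (n.factorial : ℝ)
      = Real.exp (-x) * (x ^ n / (n.factorial : ℝ)) := by ring
    _ ≤ tail n x := mul_le_mul_of_nonneg_left h (Real.exp_pos _).le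

lemma contDiff_tail (n : ℕ) : ContDiff ℝ 1 (tail n) := by
  unfold tail
  fun_prop

lemma hasDerivAt_tail (n : ℕ) (x : ℝ) :
    HasDerivAt (tail n) (-(x ^ n * Real.exp (-x) / (n.factorial : ℝ))) x := by
  induction n with
  | zero =>
    have h : tail 0 = fun y => Real.exp (-y) := by funext y; simp [tail]
    rw [h]
    simpa using (hasDerivAt_neg x).exp
  | succ n ih =>
    have h : tail (n + 1) = fun y =>
        tail n y + Real.exp (-y) * (y ^ (n + 1) / ((n + 1).factorial : ℝ)) := by
      funext y
      simp only [tail]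
      rw [Finset.sum_range_succ _ (n + 1), mul_add]
    rw [h]
    have h1 := ih.add ((hasDerivAt_neg x).exp.mul
      ((hasDerivAt_pow (n + 1) x).div_const ((n + 1).factorial : ℝ)))
    refine h1.congr_deriv ?_
    have hn : (n.factorial : ℝ) ≠ 0 := by positivity
    have hn1 : (n : ℝ) + 1 ≠ 0 := by positivity
    simp only [Nat.factorial_succ, Nat.cast_mul, Nat.cast_add, Nat.cast_one, Nat.add_sub_cancel]
    field_simp
    ring

/-- The finite-horizon bound, obtained by integrating `K' ≤ 0` over `[0, T]`. It holds for any `A`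
dominating the partial integrals of `g` up to `T`. -/
lemma truncated_bound (g : ℝ → ℝ) (n : ℕ) (A T : ℝ) (hT : 0 ≤ T)
    (hg01 : ∀ᵐ s : ℝ, s ∈ Set.Ioi (0 : ℝ) → 0 ≤ g s ∧ g s ≤ 1)
    (hgint : IntervalIntegrable g volume 0 T)
    (hA : ∀ x ∈ Set.Icc 0 T, ∫ s in (0 : ℝ)..x, g s ≤ A) :
    ∫ s in (0 : ℝ)..T, s ^ n * Real.exp (-s) / (n.factorial : ℝ) * g s
      ≤ 1 - Real.exp (-A) := by
  set f : ℝ → ℝ := fun s => s ^ n * Real.exp (-s) / (n.factorial : ℝ) with hf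
  set G : ℝ → ℝ := fun x => ∫ s in (0 : ℝ)..x, g s with hG
  set H : ℝ → ℝ := fun x => ∫ s in (0 : ℝ)..x, f s * g s with hH
  have hfc : Continuous f := by rw [hf]; fun_prop
  have hfg : IntervalIntegrable (fun s => f s * g s) volume 0 T :=
    hgint.continuousOn_mul hfc.continuousOn
  have hHac : AbsolutelyContinuousOnInterval H 0 T :=
    hfg.absolutelyContinuousOnInterval_intervalIntegral Set.left_mem_uIcc
  -- Since `g ≤ 1`, `G` is Lipschitz; so is its composition with `exp`, which is Lipschitz on
  -- the compact interval containing the values of `G - A`.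
  have hGlip : LipschitzOnWith 1 (fun x => G x - A) (Set.uIcc 0 T) := by
    refine LipschitzOnWith.of_dist_le_mul fun x hx y hy => ?_
    have hsub : ∀ z ∈ Set.uIcc 0 T, IntervalIntegrable g volume 0 z := fun z hz =>
      hgint.mono_set (Set.uIcc_subset_uIcc_left hz)
    have e : G x - A - (G y - A) = ∫ s in y..x, g s := by
      rw [← intervalIntegral.integral_interval_sub_left (hsub x hx) (hsub y hy)]
      ring
    rw [Real.dist_eq, e, Real.dist_eq, ← Real.norm_eq_abs]
    refine intervalIntegral.norm_integral_le_of_norm_le_const_ae ?_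
    filter_upwards [hg01] with s hs hmem
    rw [Set.uIcc_of_le hT] at hx hy
    have h0 : 0 < s := lt_of_le_of_lt (le_min hy.1 hx.1) hmem.1
    obtain ⟨h1, h2⟩ := hs h0
    rw [Real.norm_eq_abs, abs_of_nonneg h1]
    simpa using h2
  obtain ⟨C, hC⟩ := hGlip.absolutelyContinuousOnInterval.exists_bound
  obtain ⟨L, hL⟩ := (Real.contDiff_exp (n := 1)).contDiffOn.exists_lipschitzOnWith
    (by decide) (convex_Icc (-C) C) isCompact_Icc
  have hEac : AbsolutelyContinuousOnInterval (fun x => Real.exp (G x - A)) 0 T :=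
    (hL.comp hGlip fun x hx => abs_le.1 (hC x hx)).absolutelyContinuousOnInterval
  have hone : AbsolutelyContinuousOnInterval (fun _ : ℝ => (1 : ℝ)) 0 T :=
    (contDiff_const (n := 1)).contDiffOn.absolutelyContinuousOnInterval
  have hKac : AbsolutelyContinuousOnInterval
      (fun x => H x + tail n x * (1 - Real.exp (G x - A))) 0 T :=
    hHac.add ((contDiff_tail n).contDiffOn.absolutelyContinuousOnInterval.mul (hone.sub hEac))
  have hint := hKac.integral_deriv_eq_sub
  have hle : ∫ x in (0 : ℝ)..T, deriv (fun x => H x + tail n x * (1 - Real.exp (G x - A))) x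
      ≤ 0 := by
    rw [intervalIntegral.integral_of_le hT]
    refine integral_nonpos_of_ae ?_
    rw [Filter.EventuallyLE, ae_restrict_iff' measurableSet_Ioc]
    filter_upwards [hgint.ae_hasDerivAt_integral, hfg.ae_hasDerivAt_integral, hg01]
      with x hx1 hx2 hx3 hx
    have hxI : x ∈ Set.uIcc 0 T := by rw [Set.uIcc_of_le hT]; exact ⟨hx.1.le, hx.2⟩
    have dG : HasDerivAt G (g x) x := hx1 hxI 0 Set.left_mem_uIcc
    have dH : HasDerivAt H (f x * g x) x := hx2 hxI 0 Set.left_mem_uIcc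
    obtain ⟨h0, h1⟩ := hx3 hx.1
    have dK := dH.add ((hasDerivAt_tail n x).mul ((dG.sub_const A).exp.const_sub 1))
    have hE1 : Real.exp (G x - A) ≤ 1 :=
      Real.exp_le_one_iff.2 (sub_nonpos.2 (hA x ⟨hx.1.le, hx.2⟩))
    have hE0 := Real.exp_pos (G x - A)
    have hfF : f x ≤ tail n x := density_le_tail n hx.1.le
    have hf0 : 0 ≤ f x := by
      have := hx.1.le
      simp only [hf]
      positivity
    refine (dK.deriv.trans_le ?_)
    change f x * g x + (-f x * (1 - Real.exp (G x - A))
      + tail n x * -(Real.exp (G x - A) * g x)) ≤ 0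
    have p1 := mul_nonneg (sub_nonneg.2 hfF) (mul_nonneg hE0.le h0)
    have p2 := mul_nonneg hf0 (mul_nonneg (sub_nonneg.2 h1) (sub_nonneg.2 hE1))
    linarith
  rw [hint] at hle
  have hG0 : G 0 = 0 := by simp [hG]
  have hH0 : H 0 = 0 := by simp [hH]
  simp only [hG0, hH0, tail_zero, zero_sub, zero_add, one_mul] at hle
  have hT1 : 0 ≤ tail n T * (1 - Real.exp (G T - A)) :=
    mul_nonneg (tail_nonneg n hT) (sub_nonneg.2
      (Real.exp_le_one_iff.2 (sub_nonpos.2 (hA T ⟨hT, le_rfl⟩))))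
  change H T ≤ _
  linarith

end Galbis

/-- Galbis-type integration lemma, pointwise-in-`n` form: for `g` measurable on `(0, ∞)`
with `0 ≤ g ≤ 1` a.e. and `g` integrable, for each fixed `n ∈ ℕ₀`,
`(1/n!) ∫_0^∞ s^n e^{-s} g(s) ds ≤ 1 - e^{-‖g‖_{L¹(0,∞)}}`. -/
theorem galbis_lemma_pointwise (g : ℝ → ℝ) (hgmeas : Measurable g)
    (hg01 : ∀ᵐ s ∂(volume.restrict (Set.Ioi (0 : ℝ))), 0 ≤ g s ∧ g s ≤ 1)
    (hgint : IntegrableOn g (Set.Ioi 0)) (n : ℕ) :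
    (1 / (n.factorial : ℝ)) * ∫ s in Set.Ioi (0 : ℝ), s ^ n * Real.exp (-s) * g s
      ≤ 1 - Real.exp (-(∫ s in Set.Ioi (0 : ℝ), g s)) := by
  have hrw : (1 / (n.factorial : ℝ)) * ∫ s in Set.Ioi (0 : ℝ), s ^ n * Real.exp (-s) * g s
      = ∫ s in Set.Ioi (0 : ℝ), s ^ n * Real.exp (-s) / (n.factorial : ℝ) * g s := by
    rw [← integral_const_mul]
    congr 1
    funext s
    ring
  rw [hrw]
  -- The weight `s ^ n * exp (-s) / n!` is at most `exp s * exp (-s) = 1`, so the integrand is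
  -- dominated by `g`.
  have hfgint : IntegrableOn (fun s => s ^ n * Real.exp (-s) / (n.factorial : ℝ) * g s)
      (Set.Ioi 0) := by
    refine Integrable.mono' hgint (by fun_prop) ?_
    filter_upwards [hg01, ae_restrict_mem measurableSet_Ioi] with s hs hs0
    have hs0' : (0 : ℝ) ≤ s := le_of_lt hs0
    have hw : s ^ n * Real.exp (-s) / (n.factorial : ℝ) ≤ 1 := by
      calc s ^ n * Real.exp (-s) / (n.factorial : ℝ)
          = s ^ n / (n.factorial : ℝ) * Real.exp (-s) := by ring
        _ ≤ Real.exp s * Real.exp (-s) :=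
          mul_le_mul_of_nonneg_right (Real.pow_div_factorial_le_exp s hs0' n) (Real.exp_pos _).le
        _ = 1 := by rw [← Real.exp_add]; simp
    have hw0 : 0 ≤ s ^ n * Real.exp (-s) / (n.factorial : ℝ) := by positivity
    rw [Real.norm_eq_abs, abs_of_nonneg (mul_nonneg hw0 hs.1)]
    exact mul_le_of_le_one_left hs.1 hw
  refine le_of_tendsto (intervalIntegral_tendsto_integral_Ioi 0 hfgint Filter.tendsto_id) ?_
  filter_upwards [Filter.eventually_ge_atTop (0 : ℝ)] with T hT
  refine Galbis.truncated_bound g n _ T hT ((ae_restrict_iff' measurableSet_Ioi).1 hg01) ?_ ?_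
  · rw [intervalIntegrable_iff_integrableOn_Ioc_of_le hT]
    exact hgint.mono_set Set.Ioc_subset_Ioi_self
  · intro x hx
    rw [intervalIntegral.integral_of_le hx.1]
    exact setIntegral_mono_set hgint (hg01.mono fun s hs => hs.1)
      Set.Ioc_subset_Ioi_self.eventuallyLE
end

section
/- For all real numbers a, b with 0 ≤ a ≤ b and every n ∈ ℕ₀, (1/n!) ∫_a^b s^n e^{−s} ds ≤ 1 − e^{−(b−a)}. -/
/-!
Let `P x = ∑ k ≤ n, x ^ k / k!`. Since `-e^{-s} P s` is an antiderivative of `s ^ n / n! * e^{-s}`,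
the left-hand side equals `e^{-a} P a - e^{-b} P b`. As `P` is monotone on `[0, ∞)`, this is at most
`e^{-a} P a (1 - e^{-(b-a)})`, and `e^{-a} P a ≤ 1` because `P` is a partial sum of the exponential
series. In terms of a Poisson process `N`, this is the bound
`ℙ(N a ≤ n < N b) ≤ ℙ(N a ≠ N b)`.
-/

open MeasureTheory Real

/-- The sum over `k ≤ n` telescopes under differentiation, leaving only the top-degree term. -/
lemma hasDerivAt_neg_exp_mul_partialSum (n : ℕ) (x : ℝ) :
    HasDerivAt (fun s : ℝ => -(exp (-s) * ∑ k ∈ Finset.range (n + 1), s ^ k / (k.factorial : ℝ)))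
      (1 / (n.factorial : ℝ) * (x ^ n * exp (-x))) x := by
  have hexp : HasDerivAt (fun s : ℝ => exp (-s)) (-exp (-x)) x := by
    simpa using (hasDerivAt_neg x).exp
  induction n with
  | zero => simpa using hexp.fun_neg
  | succ n ih =>
    have hterm := (hexp.mul ((hasDerivAt_pow (n + 1) x).div_const ((n + 1).factorial : ℝ))).neg
    refine ((ih.add hterm).congr_of_eventuallyEq (.of_forall fun s => ?_)).congr_deriv ?_
    · simp only [Finset.sum_range_succ _ (n + 1), Pi.add_apply, Pi.neg_apply, Pi.mul_apply]
      ring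
    · have h : (n.factorial : ℝ) ≠ 0 := by positivity
      have h' : (n : ℝ) + 1 ≠ 0 := by positivity
      simp only [Nat.factorial_succ, Nat.cast_mul, Nat.cast_add, Nat.cast_one, Nat.add_sub_cancel]
      field_simp
      ring

/-- For `0 ≤ a ≤ b` and `n ∈ ℕ₀`, `(1/n!) ∫_a^b s^n e^{-s} ds ≤ 1 - e^{-(b-a)}`. -/
theorem interval_integral_pow_mul_exp_le (a b : ℝ) (ha : 0 ≤ a) (hab : a ≤ b) (n : ℕ) :
    (1 / (n.factorial : ℝ)) * ∫ s in a..b, s ^ n * Real.exp (-s) ≤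
      1 - Real.exp (-(b - a)) := by
  rw [← intervalIntegral.integral_const_mul,
    intervalIntegral.integral_eq_sub_of_hasDerivAt
      (fun x _ => hasDerivAt_neg_exp_mul_partialSum n x)
      (Continuous.intervalIntegrable (by fun_prop) a b)]
  have hmono : ∑ k ∈ Finset.range (n + 1), a ^ k / (k.factorial : ℝ) ≤
      ∑ k ∈ Finset.range (n + 1), b ^ k / (k.factorial : ℝ) := by
    gcongr
  have hle := sum_le_exp_of_nonneg ha (n + 1)
  set A := ∑ k ∈ Finset.range (n + 1), a ^ k / (k.factorial : ℝ)
  set B := ∑ k ∈ Finset.range (n + 1), b ^ k / (k.factorial : ℝ)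
  have hexp : exp (-b) ≤ exp (-a) := exp_le_exp.2 (by linarith)
  calc -(exp (-b) * B) - -(exp (-a) * A)
      ≤ A * (exp (-a) - exp (-b)) := by
        linarith [mul_le_mul_of_nonneg_left hmono (exp_pos (-b)).le]
    _ ≤ exp a * (exp (-a) - exp (-b)) :=
        mul_le_mul_of_nonneg_right hle (sub_nonneg.2 hexp)
    _ = 1 - exp (-(b - a)) := by
        rw [mul_sub, ← exp_add, ← exp_add, add_neg_cancel, exp_zero]
        congr 2
        ring
end

section
/- Let n ∈ ℕ₀ and let g : (0, ∞) → ℝ be measurable with 0 ≤ g(s) ≤ 1 for almost every s and with ∫_0^∞ g(s) ds = L < ∞. Then ∫_0^∞ (s^n / n!) e^{−s} g(s) ds ≤ sup_{a ≥ 0} ∫_a^{a+L} (s^n / n!) e^{−s} ds; that is, among all such g with fixed L¹ norm L, the integral ∫_0^∞ h_n(s) g(s) ds is maximized (up to taking a supremum) by indicator functions of intervals of length L, where h_n(s) = (s^n / n!) e^{−s}. -/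
open MeasureTheory Real

/-!
Write `h s = s ^ n / n! * exp (-s)`, which increases on `[0, n]` and decreases on `[n, ∞)`.
The intermediate value theorem gives `a ≥ 0` such that the interval `[a, a + L]` contains `n`
and `h a = h (a + L) =: c` (for `n = 0` take `a = 0` and `c = h L`). Then `h ≥ c` on `[a, a + L]`
and `h ≤ c` on the rest of `(0, ∞)`, so `(h - c) * (g - 𝟙_[a, a + L]) ≤ 0` almost everywhere.
Since `g` and the indicator have the same integral `L`, integrating this inequality yields
`∫ h g ≤ ∫_a^{a+L} h`, and the right-hand side is one of the terms of the supremum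
(a bounded family, because `h ≤ 1`).
-/

namespace Bathtub

/-- The weight `h_n(s) = s ^ n / n! * exp (-s)`. -/
noncomputable def weight (n : ℕ) (s : ℝ) : ℝ := s ^ n / (n.factorial : ℝ) * Real.exp (-s)

lemma continuous_weight (n : ℕ) : Continuous (weight n) := by
  unfold weight
  fun_prop

lemma weight_nonneg (n : ℕ) {s : ℝ} (hs : 0 ≤ s) : 0 ≤ weight n s := by
  unfold weight
  positivity

lemma weight_le_one (n : ℕ) {s : ℝ} (hs : 0 ≤ s) : weight n s ≤ 1 := by
  unfold weight
  rw [Real.exp_neg, ← div_eq_mul_inv, div_le_one (Real.exp_pos s)]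
  exact Real.pow_div_factorial_le_exp s hs n

/-- Unimodality of the weight in a single inequality: the hypothesis `h` says that `v` lies
between `u` and `n` (or `v = u`, or `v = n`). It follows from `u / v ≤ exp (u / v - 1)`. -/
lemma weight_le_weight (n : ℕ) {u v : ℝ} (hu : 0 ≤ u) (hv : 0 ≤ v)
    (h : (n - v) * (u - v) ≤ 0) : weight n u ≤ weight n v := by
  rcases hv.eq_or_lt with rfl | hv
  · -- `v = 0` forces `n = 0` or `u = 0`.
    rcases hu.eq_or_lt with rfl | hu
    · exact le_rfl
    · have hn : (n : ℝ) ≤ 0 := by nlinarith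
      have hn0 : n = 0 := by exact_mod_cast le_antisymm hn (Nat.cast_nonneg n)
      subst hn0
      simp [weight, hu.le]
  · have h1 : u / v ≤ Real.exp (u / v - 1) := by
      have := Real.add_one_le_exp (u / v - 1)
      linarith
    have h2 : (u / v) ^ n ≤ Real.exp (u - v) := by
      calc (u / v) ^ n ≤ Real.exp (u / v - 1) ^ n := by gcongr
        _ = Real.exp (n * (u / v - 1)) := (Real.exp_nat_mul _ n).symm
        _ ≤ Real.exp (u - v) := by
          apply Real.exp_le_exp.mpr
          have : n * (u / v - 1) - (u - v) = ((n - v) * (u - v)) / v := by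
            field_simp
          have := div_nonpos_of_nonpos_of_nonneg h hv.le
          linarith
    rw [div_pow, div_le_iff₀ (by positivity), Real.exp_sub] at h2
    unfold weight
    rw [Real.exp_neg, Real.exp_neg]
    have hf : (0 : ℝ) < n.factorial := by positivity
    have hu' := Real.exp_pos u
    have hv' := Real.exp_pos v
    calc u ^ n / n.factorial * (Real.exp u)⁻¹
        ≤ (Real.exp u / Real.exp v * v ^ n) / n.factorial * (Real.exp u)⁻¹ := by gcongr
      _ = v ^ n / n.factorial * (Real.exp v)⁻¹ := by field_simp

/-- An interval of length `L` around the mode `n` at whose endpoints the weight agrees;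
for `n = 0` the weight is decreasing and the interval starts at `0`. -/
lemma exists_left_endpoint (n : ℕ) {L : ℝ} (hL : 0 ≤ L) :
    ∃ a : ℝ, 0 ≤ a ∧ a ≤ n ∧ n ≤ a + L ∧ (weight n a = weight n (a + L) ∨ n = 0) := by
  rcases Nat.eq_zero_or_pos n with rfl | hn
  · exact ⟨0, by simp, by simp, by simpa using hL, Or.inr rfl⟩
  have hn0 : (0 : ℝ) ≤ n := Nat.cast_nonneg n
  have hle : max 0 ((n : ℝ) - L) ≤ n := max_le hn0 (by linarith)
  have hcont : ContinuousOn (fun a => weight n (a + L) - weight n a)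
      (Set.Icc (max 0 ((n : ℝ) - L)) n) :=
    (((continuous_weight n).comp (continuous_id.add continuous_const)).sub
      (continuous_weight n)).continuousOn
  have hright : weight n (n + L) - weight n n ≤ 0 := by
    have := weight_le_weight n (u := n + L) (v := n) (by linarith) hn0 (by simp)
    linarith
  have hleft : 0 ≤ weight n (max 0 ((n : ℝ) - L) + L) - weight n (max 0 ((n : ℝ) - L)) := by
    rcases le_total 0 ((n : ℝ) - L) with h | h
    · rw [max_eq_right h, sub_add_cancel]
      have := weight_le_weight n h hn0 (by simp)
      linarith
    · rw [max_eq_left h]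
      have h0 : weight n 0 = 0 := by simp [weight, hn.ne']
      have := weight_nonneg n (s := 0 + L) (by linarith)
      linarith
  obtain ⟨a, ⟨ha1, ha2⟩, ha⟩ := intermediate_value_Icc' hle hcont ⟨hright, hleft⟩
  have ha3 := le_trans (le_max_left _ _) ha1
  have ha4 := le_trans (le_max_right _ _) ha1
  exact ⟨a, ha3, ha2, by linarith, Or.inl (by simp only at ha; linarith)⟩

end Bathtub

open Bathtub in
/-- Bathtub-principle type statement: for `n ∈ ℕ₀` and `g` measurable on `(0, ∞)`
with `0 ≤ g ≤ 1` a.e. and `∫_0^∞ g = L`, one has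
`∫_0^∞ (s^n/n!) e^{-s} g(s) ds ≤ sup_{a ≥ 0} ∫_a^{a+L} (s^n/n!) e^{-s} ds`. -/
theorem bathtub_for_hn (n : ℕ) (g : ℝ → ℝ) (hgmeas : Measurable g)
    (hg01 : ∀ᵐ s ∂(volume.restrict (Set.Ioi (0 : ℝ))), 0 ≤ g s ∧ g s ≤ 1)
    (hgint : IntegrableOn g (Set.Ioi 0)) (L : ℝ)
    (hL : ∫ s in Set.Ioi (0 : ℝ), g s = L) :
    ∫ s in Set.Ioi (0 : ℝ), s ^ n / (n.factorial : ℝ) * Real.exp (-s) * g s ≤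
      ⨆ a : Set.Ici (0 : ℝ), ∫ s in (a : ℝ)..((a : ℝ) + L),
        s ^ n / (n.factorial : ℝ) * Real.exp (-s) := by
  change ∫ s in Set.Ioi (0 : ℝ), weight n s * g s ≤
    ⨆ a : Set.Ici (0 : ℝ), ∫ s in (a : ℝ)..((a : ℝ) + L), weight n s
  have hL0 : 0 ≤ L := hL ▸ integral_nonneg_of_ae (hg01.mono fun s hs => hs.1)
  have hbdd : BddAbove (Set.range fun a : Set.Ici (0 : ℝ) =>
      ∫ s in (a : ℝ)..((a : ℝ) + L), weight n s) := by
    refine ⟨L, ?_⟩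
    rintro _ ⟨⟨a, ha⟩, rfl⟩
    have ha : 0 ≤ a := ha
    calc ∫ s in a..(a + L), weight n s ≤ ∫ _ in a..(a + L), (1 : ℝ) :=
          intervalIntegral.integral_mono_on (by linarith)
            ((continuous_weight n).intervalIntegrable _ _) (by simp)
            fun s hs => weight_le_one n (ha.trans hs.1)
      _ = L := by simp
  obtain ⟨a, ha0, han, hna, hc⟩ := exists_left_endpoint n hL0
  refine le_trans ?_ (le_ciSup hbdd ⟨a, ha0⟩)
  change _ ≤ ∫ s in a..(a + L), weight n s
  set c := weight n (a + L) with hcdef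
  have hinside : ∀ s, 0 < s → s ∈ Set.Ioc a (a + L) → c ≤ weight n s := by
    intro s hs hsa
    rcases le_total s n with h | h
    · rcases hc with hc | rfl
      · rw [← hc]
        exact weight_le_weight n ha0 hs.le (by nlinarith [hsa.1])
      · norm_num at h
        linarith
    · exact weight_le_weight n (by linarith) hs.le (by nlinarith [hsa.2])
  have houtside : ∀ s, 0 < s → s ∉ Set.Ioc a (a + L) → weight n s ≤ c := by
    intro s hs hsa
    rcases le_or_gt s a with h | h
    · rcases hc with hc | rfl
      · rw [← hc]
        exact weight_le_weight n hs.le ha0 (by nlinarith)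
      · norm_num at han
        linarith
    · have h' : a + L < s := by
        by_contra! h'
        exact hsa ⟨h, h'⟩
      exact weight_le_weight n hs.le (by linarith) (by nlinarith)
  have hsub : Set.Ioc a (a + L) ⊆ Set.Ioi 0 := fun s hs => ha0.trans_lt hs.1
  have hwg : IntegrableOn (fun s => weight n s * g s) (Set.Ioi 0) := by
    refine Integrable.bdd_mul (c := 1) hgint (continuous_weight n).aestronglyMeasurable ?_
    filter_upwards [ae_restrict_mem measurableSet_Ioi] with s hs
    rw [Real.norm_of_nonneg (weight_nonneg n (le_of_lt hs))]
    exact weight_le_one n (le_of_lt hs)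
  have hind : IntegrableOn ((Set.Ioc a (a + L)).indicator fun s => weight n s - c)
      (Set.Ioi 0) := by
    refine IntegrableOn.mono_set (t := Set.univ) ?_ (Set.subset_univ _)
    rw [integrableOn_univ, integrable_indicator_iff measurableSet_Ioc]
    exact ((continuous_weight n).sub continuous_const).integrableOn_Ioc
  have hineq : ∫ s in Set.Ioi (0 : ℝ), (weight n s * g s - c * g s) ≤
      ∫ s in Set.Ioi (0 : ℝ), (Set.Ioc a (a + L)).indicator (fun s => weight n s - c) s := by
    refine integral_mono_ae (hwg.sub (hgint.const_mul c)) hind ?_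
    filter_upwards [hg01, ae_restrict_mem measurableSet_Ioi] with s hg hs
    by_cases hsI : s ∈ Set.Ioc a (a + L)
    · rw [Set.indicator_of_mem hsI]
      nlinarith [hinside s hs hsI]
    · rw [Set.indicator_of_notMem hsI]
      nlinarith [houtside s hs hsI]
  rw [integral_sub hwg (hgint.const_mul c), integral_const_mul, hL,
    setIntegral_indicator measurableSet_Ioc, Set.inter_eq_self_of_subset_right hsub,
    ← intervalIntegral.integral_of_le (by linarith),
    intervalIntegral.integral_sub ((continuous_weight n).intervalIntegrable _ _) (by simp),
    intervalIntegral.integral_const, smul_eq_mul] at hineq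
  linarith
end
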